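/- Let a = (4/π)·𝒦(1/√2)². The function f(K) = log(λ(K))/(K−1) is strictly decreasing and convex on (1, ∞); moreover f(K) → a as K → 1⁺ and f(K) → π as K → ∞, so f maps (1, ∞) onto (π, a). -/

import Mathlib

open Set Filter

/-- Complete elliptic integral of the first kind. -/
noncomputable def ellK (r : ℝ) : ℝ :=
  ∫ θ in (0:ℝ)..(Real.pi / 2), (1 - r ^ 2 * Real.sin θ ^ 2) ^ (-(1/2) : ℝ)

/-- The Grötzsch modulus μ(r) = (π/2)·𝒦'(r)/𝒦(r). -/
noncomputable def mu (r : ℝ) : ℝ :=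
  Real.pi / 2 * ellK (Real.sqrt (1 - r ^ 2)) / ellK r

/-!
In terms of the logit `t = log (r² / (1 - r²))`, the function `log λ` is the inverse of
`t ↦ 𝒦 / 𝒦'`, and `t ↦ -t` exchanges `𝒦` with `𝒦'`. Legendre's relation says that the Wronskian of
`𝒦` and `𝒦'` with respect to `t` is the constant `π / 4`, so `𝒦 / 𝒦'` has derivative `π / (4 𝒦'²)`
and `(log λ)' = (4 / π) 𝒦'²`. Since `𝒦` and `d𝒦/dt` are positive and increasing in `t`, this
derivative is a strictly decreasing convex function of `K`; it equals `a` at `K = 1` and tends to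
`(4 / π) (π / 2)² = π` as `K → ∞`. As `log λ(1) = 0`, the value `f(K)` is the mean of `(log λ)'`
over `[1, K]`, and such means inherit strict monotonicity, convexity and the limits at both ends.
-/

open scoped Topology

section Calculus

open MeasureTheory
open AffineMap (lineMap lineMap_apply_module')

theorem hasDerivAt_intervalIntegral_of_continuousOn {𝕜 E : Type*} [RCLike 𝕜]
    [NormedAddCommGroup E] [NormedSpace ℝ E] [NormedSpace 𝕜 E] {μ : Measure ℝ}
    [IsLocallyFiniteMeasure μ] {F F' : 𝕜 → ℝ → E} {x₀ : 𝕜} {s : Set 𝕜} {a b : ℝ}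
    (hs : s ∈ 𝓝 x₀) (hF : ∀ x ∈ s, ContinuousOn (F x) (uIcc a b))
    (hF' : ContinuousOn F'.uncurry (s ×ˢ uIcc a b))
    (h_diff : ∀ x ∈ s, ∀ t ∈ uIcc a b, HasDerivAt (fun x ↦ F x t) (F' x t) x) :
    HasDerivAt (fun x ↦ ∫ t in a..b, F x t ∂μ) (∫ t in a..b, F' x₀ t ∂μ) x₀ := by
  obtain ⟨k, hk_nhds, hks, hk⟩ := local_compact_nhds hs
  obtain ⟨C, hC⟩ := (hk.prod isCompact_uIcc).exists_bound_of_continuousOn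
    (hF'.mono (prod_mono_left hks))
  have hF'₀ : ContinuousOn (F' x₀) (uIcc a b) :=
    hF'.comp (f := Prod.mk x₀) (by fun_prop) fun _ ht ↦ ⟨mem_of_mem_nhds hs, ht⟩
  refine (intervalIntegral.hasDerivAt_integral_of_dominated_loc_of_deriv_le
    (bound := fun _ ↦ C) hk_nhds ?_ (hF x₀ (mem_of_mem_nhds hs)).intervalIntegrable
    hF'₀.intervalIntegrable.def'.aestronglyMeasurable ?_ intervalIntegrable_const ?_).2
  · filter_upwards [hs] with x hx using (hF x hx).intervalIntegrable.def'.aestronglyMeasurable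
  · exact .of_forall fun t ht x hx ↦ hC (x, t) ⟨hx, uIoc_subset_uIcc ht⟩
  · exact .of_forall fun t ht x hx ↦ h_diff x (hks hx) t (uIoc_subset_uIcc ht)

theorem hasDerivAt_of_leftInverse_of_strictMono {φ ψ : ℝ → ℝ} {φ' t : ℝ} (hφ : StrictMono φ)
    (hψ : Function.LeftInverse ψ φ) (ht : range φ ∈ 𝓝 (φ t)) (hφ' : HasDerivAt φ φ' t)
    (hne : φ' ≠ 0) : HasDerivAt ψ φ'⁻¹ (φ t) := by
  have hψ_mono : StrictMonoOn ψ (range φ) := by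
    rintro _ ⟨x, rfl⟩ _ ⟨y, rfl⟩ hxy
    simpa only [hψ x, hψ y] using hφ.lt_iff_lt.1 hxy
  have hψ_image : ψ '' range φ = univ := by
    rw [← range_comp, hψ.comp_eq_id, range_id]
  have hψ_cont : ContinuousAt ψ (φ t) :=
    hψ_mono.continuousAt_of_image_mem_nhds ht (hψ_image ▸ univ_mem)
  refine HasDerivAt.of_local_left_inverse hψ_cont ((hψ t).symm ▸ hφ') hne ?_
  filter_upwards [ht]
  rintro _ ⟨x, rfl⟩
  rw [hψ x]

theorem image_Ioi_eq_Ioo_of_strictAntiOn {α β : Type*} [ConditionallyCompleteLinearOrder α]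
    [TopologicalSpace α] [OrderTopology α] [DenselyOrdered α] [NoMaxOrder α] [LinearOrder β]
    [TopologicalSpace β] [OrderTopology β] {f : α → β} {a : α} {l : β}
    (hf : ContinuousOn f (Ici a)) (hanti : StrictAntiOn f (Ici a)) (hlim : Tendsto f atTop (𝓝 l)) :
    f '' Ioi a = Ioo l (f a) := by
  apply Subset.antisymm
  · rintro _ ⟨x, hx : a < x, rfl⟩
    obtain ⟨y, hxy⟩ := exists_gt x
    refine ⟨lt_of_le_of_lt (le_of_tendsto hlim ?_) (hanti hx.le (hx.trans hxy).le hxy),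
      hanti self_mem_Ici hx.le hx⟩
    filter_upwards [eventually_ge_atTop y] with z hz
    exact hanti.antitoneOn (hx.trans hxy).le ((hx.trans hxy).le.trans hz) hz
  · rintro y ⟨hly, hya⟩
    have : Nonempty α := ⟨a⟩
    obtain ⟨b, hby, hab⟩ := ((hlim.eventually_lt_const hly).and (eventually_ge_atTop a)).exists
    exact image_mono Ioo_subset_Ioi_self
      (intermediate_value_Ioo' hab (hf.mono Icc_subset_Ici_self) ⟨hby, hya⟩)

theorem isLittleO_id_atTop_of_tendsto_deriv_zero {E : Type*} [NormedAddCommGroup E]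
    [NormedSpace ℝ E] {f f' : ℝ → E} (hf : ∀ᶠ x in atTop, HasDerivAt f (f' x) x)
    (hf' : Tendsto f' atTop (𝓝 0)) : f =o[atTop] (id : ℝ → ℝ) := by
  refine Asymptotics.isLittleO_iff.2 fun ε hε ↦ ?_
  have hsmall : ∀ᶠ x in atTop, ‖f' x‖ < ε / 2 :=
    hf'.norm.eventually_lt_const (by simpa using half_pos hε)
  obtain ⟨M, hM⟩ := ((hf.and hsmall).and (eventually_ge_atTop 0)).exists_forall_of_atTop
  have hconst : ∀ᶠ x : ℝ in atTop, ‖f M‖ ≤ ε / 2 * ‖id x‖ :=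
    Asymptotics.isLittleO_iff.1 (Asymptotics.isLittleO_const_id_atTop (f M)) (half_pos hε)
  filter_upwards [hconst, eventually_ge_atTop M] with x hx hMx
  have hM₀ : 0 ≤ M := (hM M le_rfl).2
  calc ‖f x‖ ≤ ‖f x - f M‖ + ‖f M‖ := norm_le_norm_sub_add _ _
    _ ≤ ε / 2 * ‖x - M‖ + ε / 2 * ‖x‖ := by
      refine add_le_add ?_ hx
      exact (convex_Ici M).norm_image_sub_le_of_norm_hasDerivWithin_le
        (fun y hy ↦ (hM y hy).1.1.hasDerivWithinAt) (fun y hy ↦ (hM y hy).1.2.le)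
        self_mem_Ici hMx
    _ ≤ ε / 2 * ‖x‖ + ε / 2 * ‖x‖ := by
      gcongr
      rw [Real.norm_of_nonneg (sub_nonneg.2 hMx), Real.norm_of_nonneg (hM₀.trans hMx)]
      exact sub_le_self x hM₀
    _ = ε * ‖id x‖ := by rw [id]; ring

theorem tendsto_dslope_atTop_of_tendsto_deriv {f : ℝ → ℝ} {l : ℝ} (a : ℝ)
    (hf : ∀ᶠ x in atTop, DifferentiableAt ℝ f x) (hf' : Tendsto (deriv f) atTop (𝓝 l)) :
    Tendsto (dslope f a) atTop (𝓝 l) := by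
  have hremainder : (fun x ↦ f x - f a - (x - a) * l) =o[atTop] (id : ℝ → ℝ) := by
    refine isLittleO_id_atTop_of_tendsto_deriv_zero (f' := fun x ↦ deriv f x - l) ?_ ?_
    · filter_upwards [hf] with x hx
      simpa using! (hx.hasDerivAt.sub_const (f a)).sub
        (((hasDerivAt_id x).sub_const a).mul_const l)
    · simpa using hf'.sub_const l
  have hid : (id : ℝ → ℝ) =O[atTop] fun x ↦ x - a :=
    (Asymptotics.IsEquivalent.refl.sub_isLittleO
      (Asymptotics.isLittleO_const_id_atTop a)).isBigO_symm
  have hquot := (hremainder.trans_isBigO hid).tendsto_div_nhds_zero.add_const l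
  rw [zero_add] at hquot
  refine hquot.congr' ?_
  filter_upwards [eventually_gt_atTop a] with x hx
  have : x - a ≠ 0 := (sub_pos.2 hx).ne'
  rw [dslope_of_ne f hx.ne', slope_def_field]
  field_simp
  ring

section DSlope

variable {f : ℝ → ℝ} {s : Set ℝ} {a : ℝ}

theorem continuousOn_deriv_comp_lineMap (hs : Convex ℝ s) (ha : a ∈ s)
    (hf' : ContinuousOn (deriv f) s) {x : ℝ} (hx : x ∈ s) :
    ContinuousOn (fun t ↦ deriv f (lineMap a x t)) (Icc (0 : ℝ) 1) :=
  hf'.comp (by fun_prop) fun _ ht ↦ hs.lineMap_mem ha hx ht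

theorem dslope_eq_integral_deriv_lineMap (hs : Convex ℝ s) (ha : a ∈ s)
    (hf : ∀ x ∈ s, DifferentiableAt ℝ f x) (hf' : ContinuousOn (deriv f) s) {x : ℝ} (hx : x ∈ s) :
    dslope f a x = ∫ t in (0 : ℝ)..1, deriv f (lineMap a x t) := by
  rcases eq_or_ne x a with rfl | hxa
  · simp
  have hline (t : ℝ) : a + t • (x - a) = lineMap a x t := by
    rw [lineMap_apply_module', add_comm]
  have h := intervalIntegral.integral_unitInterval_deriv_eq_sub (f := f) (f' := deriv f)
    (z₀ := a) (z₁ := x - a)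
    (by simpa only [hline] using continuousOn_deriv_comp_lineMap hs ha hf' hx)
    fun t ht ↦ by simpa only [hline] using (hf _ (hs.lineMap_mem ha hx ht)).hasDerivAt
  simp only [hline, add_sub_cancel] at h
  rw [smul_eq_mul] at h
  rw [dslope_of_ne f hxa, slope_def_field, ← h, mul_div_cancel_left₀ _ (sub_ne_zero.2 hxa)]

theorem strictAntiOn_dslope_of_strictAntiOn_deriv (hs : Convex ℝ s) (ha : a ∈ s)
    (hf : ∀ x ∈ s, DifferentiableAt ℝ f x) (hf' : ContinuousOn (deriv f) s)
    (hanti : StrictAntiOn (deriv f) s) : StrictAntiOn (dslope f a) s := by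
  intro x hx y hy hxy
  rw [dslope_eq_integral_deriv_lineMap hs ha hf hf' hx,
    dslope_eq_integral_deriv_lineMap hs ha hf hf' hy]
  have hlt : ∀ t ∈ Ioc (0 : ℝ) 1, deriv f (lineMap a y t) < deriv f (lineMap a x t) :=
    fun t ht ↦ hanti (hs.lineMap_mem ha hx (Ioc_subset_Icc_self ht))
      (hs.lineMap_mem ha hy (Ioc_subset_Icc_self ht)) (lineMap_strict_mono_right hxy ht.1)
  exact intervalIntegral.integral_lt_integral_of_continuousOn_of_le_of_exists_lt one_pos
    (continuousOn_deriv_comp_lineMap hs ha hf' hy) (continuousOn_deriv_comp_lineMap hs ha hf' hx)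
    (fun t ht ↦ (hlt t ht).le) ⟨1, right_mem_Icc.2 zero_le_one, hlt 1 ⟨one_pos, le_rfl⟩⟩

theorem convexOn_dslope_of_convexOn_deriv (ha : a ∈ s)
    (hf : ∀ x ∈ s, DifferentiableAt ℝ f x) (hf' : ContinuousOn (deriv f) s)
    (hconv : ConvexOn ℝ s (deriv f)) : ConvexOn ℝ s (dslope f a) := by
  have hs := hconv.1
  have hcont {x : ℝ} (hx : x ∈ s) := continuousOn_deriv_comp_lineMap hs ha hf' hx
  have hint {x : ℝ} (c : ℝ) (hx : x ∈ s) :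
      IntervalIntegrable (fun t ↦ c • deriv f (lineMap a x t)) volume 0 1 :=
    ((hcont hx).const_smul c).intervalIntegrable_of_Icc zero_le_one
  refine ⟨hs, fun x hx y hy p q hp hq hpq ↦ ?_⟩
  have hz := hs hx hy hp hq hpq
  have hline (t : ℝ) : lineMap a (p • x + q • y) t = p • lineMap a x t + q • lineMap a y t := by
    simp only [lineMap_apply_module', smul_eq_mul]
    linear_combination (t - 1) * a * hpq
  simp only [dslope_eq_integral_deriv_lineMap hs ha hf hf', hx, hy, hz]
  rw [← intervalIntegral.integral_smul, ← intervalIntegral.integral_smul,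
    ← intervalIntegral.integral_add (hint p hx) (hint q hy)]
  refine intervalIntegral.integral_mono_on zero_le_one
    ((hcont hz).intervalIntegrable_of_Icc zero_le_one) ((hint p hx).add (hint q hy)) fun t ht ↦ ?_
  rw [hline]
  exact hconv.2 (hs.lineMap_mem ha hx ht) (hs.lineMap_mem ha hy ht) hp hq hpq

end DSlope

end Calculus

section GrotzschModulus

open Real

/-- The complete elliptic integral `∫₀^{π/2} (1 - m sin² θ) ^ p dθ`, as a function of the parameter
`m = r²`: the exponent `p = -1/2` gives `𝒦(r)`, the exponent `p = 1/2` gives `ℰ(r)`. -/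
noncomputable def ellipticIntegral (p m : ℝ) : ℝ :=
  ∫ θ in (0 : ℝ)..(π / 2), (1 - m * sin θ ^ 2) ^ p

local notation "𝐊" => ellipticIntegral (-(1 / 2))

local notation "𝐄" => ellipticIntegral (1 / 2)

section EllipticIntegral

theorem ellK_eq_ellipticIntegral (r : ℝ) : ellK r = 𝐊 (r ^ 2) :=
  rfl

variable {m : ℝ}

theorem one_sub_mul_sin_sq_pos (hm : m < 1) (θ : ℝ) : 0 < 1 - m * sin θ ^ 2 := by
  rcases le_total m 0 with h | h <;> nlinarith [sin_sq_le_one θ, sq_nonneg (sin θ)]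

theorem continuous_one_sub_mul_sin_sq_rpow (p : ℝ) (hm : m < 1) :
    Continuous fun θ ↦ (1 - m * sin θ ^ 2) ^ p :=
  Continuous.rpow_const (by fun_prop) fun θ ↦ .inl (one_sub_mul_sin_sq_pos hm θ).ne'

theorem ellipticIntegral_zero_right (p : ℝ) : ellipticIntegral p 0 = π / 2 := by
  simp [ellipticIntegral]

theorem ellipticIntegral_pos (p : ℝ) (hm : m < 1) : 0 < ellipticIntegral p m :=
  intervalIntegral.intervalIntegral_pos_of_pos
    ((continuous_one_sub_mul_sin_sq_rpow p hm).intervalIntegrable _ _)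
    (fun θ ↦ rpow_pos_of_pos (one_sub_mul_sin_sq_pos hm θ) p) (by positivity)

theorem ellipticIntegral_le_of_nonpos {p : ℝ} (hp : p ≤ 0) (hm₀ : 0 ≤ m) (hm₁ : m < 1) :
    ellipticIntegral p m ≤ π / 2 * (1 - m) ^ p := by
  have hle (θ : ℝ) : (1 - m * sin θ ^ 2) ^ p ≤ (1 - m) ^ p :=
    rpow_le_rpow_of_nonpos (sub_pos.2 hm₁)
      (sub_le_sub_left (mul_le_of_le_one_right hm₀ (sin_sq_le_one θ)) 1) hp
  calc ellipticIntegral p m ≤ ∫ _ in (0 : ℝ)..(π / 2), (1 - m) ^ p :=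
        intervalIntegral.integral_mono_on (by positivity)
          ((continuous_one_sub_mul_sin_sq_rpow p hm₁).intervalIntegrable _ _)
          intervalIntegrable_const fun θ _ ↦ hle θ
    _ = π / 2 * (1 - m) ^ p := by simp

theorem continuous_ellipticIntegral {p : ℝ} (hp : 0 ≤ p) : Continuous (ellipticIntegral p) :=
  intervalIntegral.continuous_parametric_intervalIntegral_of_continuous'
    (Continuous.rpow_const (by fun_prop) fun _ ↦ .inr hp) 0 (π / 2)

theorem ellipticIntegral_half_one : 𝐄 1 = 1 := by
  have hcos : EqOn (fun θ ↦ (1 - 1 * sin θ ^ 2) ^ (1 / 2 : ℝ)) cos (uIcc 0 (π / 2)) := by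
    intro θ hθ
    rw [uIcc_of_le (by positivity)] at hθ
    have : 0 ≤ cos θ := cos_nonneg_of_mem_Icc ⟨by linarith [hθ.1, pi_pos], hθ.2⟩
    simp only [one_mul]
    rw [← cos_sq', ← sqrt_eq_rpow, sqrt_sq this]
  rw [ellipticIntegral, intervalIntegral.integral_congr hcos, integral_cos, sin_pi_div_two,
    sin_zero, sub_zero]

theorem hasDerivAt_ellipticIntegral (p : ℝ) (hm : m < 1) :
    HasDerivAt (ellipticIntegral p)
      (∫ θ in (0 : ℝ)..(π / 2), -p * sin θ ^ 2 * (1 - m * sin θ ^ 2) ^ (p - 1)) m := by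
  refine hasDerivAt_intervalIntegral_of_continuousOn
    (F' := fun x θ ↦ -p * sin θ ^ 2 * (1 - x * sin θ ^ 2) ^ (p - 1)) (Iio_mem_nhds hm)
    (fun x hx ↦ (continuous_one_sub_mul_sin_sq_rpow p hx).continuousOn) ?_ fun x hx θ _ ↦ ?_
  · exact .mul (by fun_prop) (.rpow_const (by fun_prop) fun z hz ↦
      .inl (one_sub_mul_sin_sq_pos hz.1 z.2).ne')
  · have hbase : HasDerivAt (fun x ↦ 1 - x * sin θ ^ 2) (-sin θ ^ 2) x := by
      simpa using ((hasDerivAt_id x).mul_const (sin θ ^ 2)).const_sub 1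
    exact (hbase.rpow_const (p := p) (.inl (one_sub_mul_sin_sq_pos hx θ).ne')).congr_deriv (by ring)

theorem hasDerivAt_ellipticIntegral_of_ne_zero (p : ℝ) (hm₀ : m ≠ 0) (hm₁ : m < 1) :
    HasDerivAt (ellipticIntegral p)
      (p * (ellipticIntegral p m - ellipticIntegral (p - 1) m) / m) m := by
  refine (hasDerivAt_ellipticIntegral p hm₁).congr_deriv ?_
  have hint (q : ℝ) := (continuous_one_sub_mul_sin_sq_rpow q hm₁).intervalIntegrable
    (μ := MeasureTheory.volume) 0 (π / 2)
  rw [eq_div_iff hm₀, ellipticIntegral, ellipticIntegral,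
    ← intervalIntegral.integral_sub (hint p) (hint (p - 1)),
    ← intervalIntegral.integral_const_mul, ← intervalIntegral.integral_mul_const]
  refine intervalIntegral.integral_congr fun θ _ ↦ ?_
  have hne := (one_sub_mul_sin_sq_pos hm₁ θ).ne'
  have hpow : (1 - m * sin θ ^ 2) ^ p =
      (1 - m * sin θ ^ 2) ^ (p - 1) * (1 - m * sin θ ^ 2) := by
    rw [rpow_sub_one hne, div_mul_cancel₀ _ hne]
  simp only [hpow]
  ring

theorem ellipticIntegral_recurrence (p : ℝ) (hm : m < 1) :
    2 * (p + 1) * ellipticIntegral (p + 1) m + (2 * p + 1) * (m - 2) * ellipticIntegral p m +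
      2 * p * (1 - m) * ellipticIntegral (p - 1) m = 0 := by
  have hint (c q : ℝ) : IntervalIntegrable (fun θ ↦ c * (1 - m * sin θ ^ 2) ^ q)
      MeasureTheory.volume 0 (π / 2) :=
    ((continuous_one_sub_mul_sin_sq_rpow q hm).const_mul c).intervalIntegrable _ _
  have hderiv (θ : ℝ) : HasDerivAt (fun θ ↦ m * (sin θ * cos θ * (1 - m * sin θ ^ 2) ^ p))
      (2 * (p + 1) * (1 - m * sin θ ^ 2) ^ (p + 1) +
        (2 * p + 1) * (m - 2) * (1 - m * sin θ ^ 2) ^ p +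
        2 * p * (1 - m) * (1 - m * sin θ ^ 2) ^ (p - 1)) θ := by
    have hpos := one_sub_mul_sin_sq_pos hm θ
    have hbase : HasDerivAt (fun θ ↦ 1 - m * sin θ ^ 2) (-(m * (2 * sin θ * cos θ))) θ := by
      simpa using (((hasDerivAt_sin θ).pow 2).const_mul m).const_sub 1
    refine ((((hasDerivAt_sin θ).mul (hasDerivAt_cos θ)).mul
      (hbase.rpow_const (p := p) (.inl hpos.ne'))).const_mul m).congr_deriv ?_
    simp only [Pi.mul_apply, rpow_sub_one hpos.ne', rpow_add_one hpos.ne']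
    field_simp
    rw [cos_sq']
    ring
  have hftc := intervalIntegral.integral_eq_sub_of_hasDerivAt (fun θ _ ↦ hderiv θ)
    (((hint _ _).add (hint _ _)).add (hint _ _))
  rw [intervalIntegral.integral_add ((hint _ _).add (hint _ _)) (hint _ _),
    intervalIntegral.integral_add (hint _ _) (hint _ _), intervalIntegral.integral_const_mul,
    intervalIntegral.integral_const_mul, intervalIntegral.integral_const_mul] at hftc
  simpa [ellipticIntegral] using hftc

theorem hasDerivAt_ellipticIntegral_half (hm₀ : m ≠ 0) (hm₁ : m < 1) :
    HasDerivAt 𝐄 ((𝐄 m - 𝐊 m) / (2 * m)) m := by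
  refine (hasDerivAt_ellipticIntegral_of_ne_zero (1 / 2) hm₀ hm₁).congr_deriv ?_
  rw [show (1 / 2 - 1 : ℝ) = -(1 / 2) by norm_num]
  field_simp

theorem hasDerivAt_ellipticIntegral_neg_half (hm₀ : m ≠ 0) (hm₁ : m < 1) :
    HasDerivAt 𝐊 ((𝐄 m - (1 - m) * 𝐊 m) / (2 * m * (1 - m))) m := by
  have hm' : 1 - m ≠ 0 := (sub_pos.2 hm₁).ne'
  have hrec : ellipticIntegral (-(1 / 2) - 1) m = 𝐄 m / (1 - m) := by
    have h := ellipticIntegral_recurrence (-(1 / 2)) hm₁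
    rw [show (-(1 / 2) + 1 : ℝ) = 1 / 2 by norm_num] at h
    rw [eq_div_iff hm']
    linear_combination -h
  refine (hasDerivAt_ellipticIntegral_of_ne_zero (-(1 / 2)) hm₀ hm₁).congr_deriv ?_
  rw [hrec]
  field_simp
  ring

theorem hasDerivAt_ellipticIntegral_half_sub (hm₀ : m ≠ 0) (hm₁ : m < 1) :
    HasDerivAt (fun x ↦ 𝐄 x - (1 - x) * 𝐊 x) (𝐊 m / 2) m := by
  have hm' : 1 - m ≠ 0 := (sub_pos.2 hm₁).ne'
  refine ((hasDerivAt_ellipticIntegral_half hm₀ hm₁).sub (((hasDerivAt_id m).const_sub 1).mul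
    (hasDerivAt_ellipticIntegral_neg_half hm₀ hm₁))).congr_deriv ?_
  simp only [id_eq]
  field_simp
  ring

theorem tendsto_mul_ellipticIntegral_one_sub :
    Tendsto (fun x ↦ x * 𝐊 (1 - x)) (𝓝[>] 0) (𝓝 0) := by
  have hbound : Tendsto (fun x ↦ π / 2 * √x) (𝓝[>] 0) (𝓝 0) :=
    ((by fun_prop : Continuous fun x ↦ π / 2 * √x).tendsto' 0 0 (by simp)).mono_left
      nhdsWithin_le_nhds
  refine squeeze_zero' ?_ ?_ hbound
  · filter_upwards [self_mem_nhdsWithin] with x (hx : 0 < x)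
    exact mul_nonneg hx.le (ellipticIntegral_pos _ (sub_lt_self 1 hx)).le
  · filter_upwards [Ioo_mem_nhdsGT one_pos] with x ⟨hx₀, hx₁⟩
    calc x * 𝐊 (1 - x) ≤ x * (π / 2 * x ^ (-(1 / 2) : ℝ)) := by
          gcongr
          simpa using ellipticIntegral_le_of_nonpos (m := 1 - x) (p := -(1 / 2)) (by norm_num)
            (sub_nonneg.2 hx₁.le) (sub_lt_self 1 hx₀)
      _ = π / 2 * √x := by
          rw [rpow_neg hx₀.le, ← sqrt_eq_rpow]
          field_simp
          rw [sq_sqrt hx₀.le]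

-- `𝒦'` is unbounded at `0`, but `ℰ - 𝒦` vanishes there to first order.
theorem tendsto_ellipticIntegral_sub_mul_one_sub :
    Tendsto (fun x ↦ (𝐄 x - 𝐊 x) * 𝐊 (1 - x)) (𝓝[>] 0) (𝓝 0) := by
  have hsub : (fun x ↦ 𝐄 x - 𝐊 x) =O[𝓝 0] id := by
    simpa [ellipticIntegral_zero_right] using! ((hasDerivAt_ellipticIntegral (1 / 2) one_pos).sub
      (hasDerivAt_ellipticIntegral (-(1 / 2)) one_pos)).isBigO_sub
  exact ((hsub.mono nhdsWithin_le_nhds).mul (Asymptotics.isBigO_refl _ _)).trans_tendsto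
    tendsto_mul_ellipticIntegral_one_sub

theorem hasDerivAt_legendre_relation (hm : m ∈ Ioo 0 1) :
    HasDerivAt (fun x ↦ (𝐄 x - 𝐊 x) * 𝐊 (1 - x) + 𝐄 (1 - x) * 𝐊 x) 0 m := by
  have hm₀ : m ≠ 0 := hm.1.ne'
  have hm₁ : 1 - m ≠ 0 := (sub_pos.2 hm.2).ne'
  have hreflect := (hasDerivAt_id m).const_sub 1
  have hE := hasDerivAt_ellipticIntegral_half hm₀ hm.2
  have hK := hasDerivAt_ellipticIntegral_neg_half hm₀ hm.2
  have hE' := (hasDerivAt_ellipticIntegral_half hm₁ (sub_lt_self 1 hm.1)).comp m hreflect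
  have hK' := (hasDerivAt_ellipticIntegral_neg_half hm₁ (sub_lt_self 1 hm.1)).comp m hreflect
  refine (((hE.sub hK).mul hK').add (hE'.mul hK)).congr_deriv ?_
  simp only [Pi.sub_apply, Function.comp_apply, sub_sub_cancel]
  field_simp
  ring

theorem tendsto_legendre_relation_zero :
    Tendsto (fun x ↦ (𝐄 x - 𝐊 x) * 𝐊 (1 - x) + 𝐄 (1 - x) * 𝐊 x) (𝓝[>] 0) (𝓝 (π / 2)) := by
  have hK : Tendsto 𝐊 (𝓝 0) (𝓝 (π / 2)) := by
    rw [← ellipticIntegral_zero_right (-(1 / 2))]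
    exact (hasDerivAt_ellipticIntegral _ one_pos).continuousAt
  have hE : Tendsto (fun x ↦ 𝐄 (1 - x)) (𝓝 0) (𝓝 1) :=
    ((continuous_ellipticIntegral one_half_pos.le).comp (continuous_sub_left 1)).tendsto' 0 1
      (by rw [Function.comp_apply, sub_zero, ellipticIntegral_half_one])
  simpa using tendsto_ellipticIntegral_sub_mul_one_sub.add
    ((hE.mul hK).mono_left nhdsWithin_le_nhds)

theorem legendre_relation (hm : m ∈ Ioo 0 1) :
    𝐄 m * 𝐊 (1 - m) + 𝐄 (1 - m) * 𝐊 m - 𝐊 m * 𝐊 (1 - m) = π / 2 := by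
  have hconst : ∀ x ∈ Ioo (0 : ℝ) 1, (𝐄 m - 𝐊 m) * 𝐊 (1 - m) + 𝐄 (1 - m) * 𝐊 m =
      (𝐄 x - 𝐊 x) * 𝐊 (1 - x) + 𝐄 (1 - x) * 𝐊 x := fun x hx ↦
    isOpen_Ioo.is_const_of_deriv_eq_zero isPreconnected_Ioo
      (fun y hy ↦ (hasDerivAt_legendre_relation hy).differentiableAt.differentiableWithinAt)
      (fun y hy ↦ (hasDerivAt_legendre_relation hy).deriv) hm hx
  have hvalue : (𝐄 m - 𝐊 m) * 𝐊 (1 - m) + 𝐄 (1 - m) * 𝐊 m = π / 2 := by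
    refine tendsto_nhds_unique (tendsto_const_nhds.congr' ?_) tendsto_legendre_relation_zero
    filter_upwards [Ioo_mem_nhdsGT one_pos] with x hx using hconst x hx
  linear_combination hvalue

theorem strictMonoOn_ellipticIntegral_half_sub :
    StrictMonoOn (fun m ↦ 𝐄 m - (1 - m) * 𝐊 m) (Ico 0 1) := by
  refine strictMonoOn_of_hasDerivWithinAt_pos (f' := fun m ↦ 𝐊 m / 2) (convex_Ico 0 1)
    (fun m hm ↦ ?_) (fun m hm ↦ ?_) fun m hm ↦ ?_
  · have hE := (hasDerivAt_ellipticIntegral (1 / 2) hm.2).continuousAt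
    have hK := (hasDerivAt_ellipticIntegral (-(1 / 2)) hm.2).continuousAt
    fun_prop
  all_goals rw [interior_Ico] at hm
  · exact (hasDerivAt_ellipticIntegral_half_sub hm.1.ne' hm.2).hasDerivWithinAt
  · exact half_pos (ellipticIntegral_pos _ hm.2)

theorem ellipticIntegral_half_sub_pos (hm : m ∈ Ioo 0 1) : 0 < 𝐄 m - (1 - m) * 𝐊 m := by
  simpa [ellipticIntegral_zero_right] using
    strictMonoOn_ellipticIntegral_half_sub ⟨le_rfl, one_pos⟩ (Ioo_subset_Ico_self hm) hm.1

end EllipticIntegral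

section Logit

/-- The complete elliptic integral `𝒦(r)` as a function of the logit
`t = log (r² / (1 - r²))`, so that `t ↦ -t` exchanges `𝒦` and `𝒦'`. -/
noncomputable def logitK (t : ℝ) : ℝ :=
  𝐊 (sigmoid t)

theorem sigmoid_mem_Ioo (t : ℝ) : sigmoid t ∈ Ioo 0 1 :=
  ⟨sigmoid_pos t, sigmoid_lt_one t⟩

theorem logitK_pos (t : ℝ) : 0 < logitK t :=
  ellipticIntegral_pos _ (sigmoid_lt_one t)

theorem hasDerivAt_logitK (t : ℝ) :
    HasDerivAt logitK ((𝐄 (sigmoid t) - (1 - sigmoid t) * 𝐊 (sigmoid t)) / 2) t := by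
  have hσ₀ := (sigmoid_pos t).ne'
  have hσ₁ : 1 - sigmoid t ≠ 0 := (sub_pos.2 (sigmoid_lt_one t)).ne'
  refine ((hasDerivAt_ellipticIntegral_neg_half hσ₀ (sigmoid_lt_one t)).comp t
    (hasDerivAt_sigmoid t)).congr_deriv ?_
  field_simp

theorem differentiable_logitK : Differentiable ℝ logitK :=
  fun t ↦ (hasDerivAt_logitK t).differentiableAt

theorem deriv_logitK :
    deriv logitK = fun t ↦ (𝐄 (sigmoid t) - (1 - sigmoid t) * 𝐊 (sigmoid t)) / 2 :=
  funext fun t ↦ (hasDerivAt_logitK t).deriv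

theorem deriv_logitK_pos (t : ℝ) : 0 < deriv logitK t := by
  rw [deriv_logitK]
  exact half_pos (ellipticIntegral_half_sub_pos (sigmoid_mem_Ioo t))

theorem strictMono_logitK : StrictMono logitK :=
  strictMono_of_deriv_pos deriv_logitK_pos

theorem strictMono_deriv_logitK : StrictMono (deriv logitK) := by
  intro s t hst
  rw [deriv_logitK]
  exact div_lt_div_of_pos_right (strictMonoOn_ellipticIntegral_half_sub
    (Ioo_subset_Ico_self (sigmoid_mem_Ioo s)) (Ioo_subset_Ico_self (sigmoid_mem_Ioo t))
    (sigmoid_lt hst)) two_pos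

theorem tendsto_logitK_atBot : Tendsto logitK atBot (𝓝 (π / 2)) := by
  rw [← ellipticIntegral_zero_right (-(1 / 2))]
  exact (hasDerivAt_ellipticIntegral _ one_pos).continuousAt.tendsto.comp tendsto_sigmoid_atBot

theorem wronskian_logitK (t : ℝ) :
    deriv logitK t * logitK (-t) + logitK t * deriv logitK (-t) = π / 4 := by
  have h := legendre_relation (sigmoid_mem_Ioo t)
  simp only [deriv_logitK, logitK, sigmoid_neg]
  linear_combination h / 2

/-- The quotient `𝒦(r) / 𝒦'(r) = π / (2 μ(r))` as a function of the logit
`t = log (r² / (1 - r²))`: it is the dilatation `K` for which `log λ(K) = t`. -/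
noncomputable def dilatation (t : ℝ) : ℝ :=
  logitK t / logitK (-t)

theorem dilatation_pos (t : ℝ) : 0 < dilatation t :=
  div_pos (logitK_pos t) (logitK_pos (-t))

theorem dilatation_zero : dilatation 0 = 1 := by
  rw [dilatation, neg_zero, div_self (logitK_pos 0).ne']

theorem dilatation_neg (t : ℝ) : dilatation (-t) = (dilatation t)⁻¹ := by
  rw [dilatation, dilatation, neg_neg, inv_div]

theorem hasDerivAt_dilatation (t : ℝ) :
    HasDerivAt dilatation (4 / π * logitK (-t) ^ 2)⁻¹ t := by
  have hK (s : ℝ) := (differentiable_logitK s).hasDerivAt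
  refine ((hK t).div ((hK (-t)).comp t (hasDerivAt_neg t)) (logitK_pos (-t)).ne').congr_deriv ?_
  have hne := (logitK_pos (-t)).ne'
  simp only [Function.comp_apply]
  field_simp
  linear_combination 4 * wronskian_logitK t

theorem differentiable_dilatation : Differentiable ℝ dilatation :=
  fun t ↦ (hasDerivAt_dilatation t).differentiableAt

theorem strictMono_dilatation : StrictMono dilatation :=
  strictMono_of_hasDerivAt_pos hasDerivAt_dilatation fun t ↦ by have := logitK_pos (-t); positivity

theorem tendsto_dilatation_atTop : Tendsto dilatation atTop atTop := by
  set c := (4 / π * logitK 0 ^ 2)⁻¹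
  have hc : 0 < c := by have := logitK_pos 0; positivity
  have hderiv : ∀ t ∈ interior (Ici (0 : ℝ)), c ≤ deriv dilatation t := by
    intro t ht
    rw [interior_Ici] at ht
    have hpos := logitK_pos (-t)
    have hle := strictMono_logitK.monotone (neg_nonpos.2 (mem_Ioi.1 ht).le)
    rw [(hasDerivAt_dilatation t).deriv]
    exact inv_anti₀ (by positivity) (by gcongr)
  refine tendsto_atTop_mono' atTop ?_ (tendsto_id.const_mul_atTop hc)
  filter_upwards [eventually_ge_atTop 0] with t ht
  have hslope := (convex_Ici 0).mul_sub_le_image_sub_of_le_deriv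
    differentiable_dilatation.continuous.continuousOn differentiable_dilatation.differentiableOn
    hderiv 0 self_mem_Ici t ht ht
  rw [sub_zero] at hslope
  exact hslope.trans (sub_le_self _ (dilatation_pos 0).le)

theorem range_dilatation : range dilatation = Ioi 0 := by
  refine Subset.antisymm (range_subset_iff.2 dilatation_pos) fun K hK ↦ ?_
  obtain ⟨s, hs⟩ := (tendsto_dilatation_atTop.eventually_ge_atTop K⁻¹).exists
  refine mem_range_of_exists_le_of_exists_ge differentiable_dilatation.continuous ⟨-s, ?_⟩
    (tendsto_dilatation_atTop.eventually_ge_atTop K).exists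
  rw [dilatation_neg]
  exact inv_le_of_inv_le₀ hK hs

section LeftInverse

variable {L : ℝ → ℝ} {K : ℝ} (hL : Function.LeftInverse L dilatation)
include hL

theorem dilatation_leftInverse_apply (hK : 0 < K) : dilatation (L K) = K := by
  obtain ⟨t, rfl⟩ := range_dilatation.ge hK
  rw [hL t]

theorem leftInverse_dilatation_one : L 1 = 0 := by
  rw [← dilatation_zero, hL]

theorem strictMonoOn_leftInverse_dilatation : StrictMonoOn L (Ioi 0) := by
  intro x hx y hy hxy
  refine strictMono_dilatation.lt_iff_lt.1 ?_
  rwa [dilatation_leftInverse_apply hL hx, dilatation_leftInverse_apply hL hy]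

theorem tendsto_leftInverse_dilatation_atTop : Tendsto L atTop atTop := by
  refine tendsto_atTop.2 fun t ↦ ?_
  filter_upwards [eventually_ge_atTop (dilatation t)] with K hK
  rw [← hL t]
  exact (strictMonoOn_leftInverse_dilatation hL).monotoneOn (dilatation_pos t)
    ((dilatation_pos t).trans_le hK) hK

theorem hasDerivAt_leftInverse_dilatation (hK : 0 < K) :
    HasDerivAt L (4 / π * logitK (-L K) ^ 2) K := by
  obtain ⟨t, rfl⟩ := range_dilatation.ge hK
  have hpos := logitK_pos (-t)
  have h := hasDerivAt_of_leftInverse_of_strictMono strictMono_dilatation hL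
    (range_dilatation ▸ Ioi_mem_nhds hK) (hasDerivAt_dilatation t) (by positivity)
  simpa only [inv_inv, hL t] using h

theorem differentiableAt_leftInverse_dilatation (hK : 0 < K) : DifferentiableAt ℝ L K :=
  (hasDerivAt_leftInverse_dilatation hL hK).differentiableAt

theorem deriv_leftInverse_dilatation (hK : 0 < K) : deriv L K = 4 / π * logitK (-L K) ^ 2 :=
  (hasDerivAt_leftInverse_dilatation hL hK).deriv

theorem strictAntiOn_deriv_leftInverse_dilatation : StrictAntiOn (deriv L) (Ioi 0) := by
  intro x hx y hy hxy
  rw [deriv_leftInverse_dilatation hL hx, deriv_leftInverse_dilatation hL hy]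
  have hpos := logitK_pos (-L y)
  have hlt := strictMono_logitK (neg_lt_neg (strictMonoOn_leftInverse_dilatation hL hx hy hxy))
  gcongr

theorem hasDerivAt_deriv_leftInverse_dilatation (hK : 0 < K) :
    HasDerivAt (deriv L) (-(32 / π ^ 2 * (logitK (-L K) ^ 3 * deriv logitK (-L K)))) K := by
  have hlogit := (differentiable_logitK (-L K)).hasDerivAt.comp K
    (hasDerivAt_leftInverse_dilatation hL hK).neg
  have hderiv : deriv L =ᶠ[𝓝 K] fun x ↦ 4 / π * logitK (-L x) ^ 2 := by
    filter_upwards [Ioi_mem_nhds hK] with x hx using deriv_leftInverse_dilatation hL hx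
  refine (((hlogit.pow 2).const_mul (4 / π)).congr_of_eventuallyEq hderiv).congr_deriv ?_
  simp only [Function.comp_apply, Pi.neg_apply]
  push_cast
  ring

theorem continuousOn_deriv_leftInverse_dilatation : ContinuousOn (deriv L) (Ioi 0) :=
  fun _ hK ↦ (hasDerivAt_deriv_leftInverse_dilatation hL hK).continuousAt.continuousWithinAt

theorem convexOn_deriv_leftInverse_dilatation : ConvexOn ℝ (Ioi 0) (deriv L) := by
  have hderiv (x : ℝ) (hx : x ∈ Ioi (0 : ℝ)) := hasDerivAt_deriv_leftInverse_dilatation hL hx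
  refine MonotoneOn.convexOn_of_deriv (convex_Ioi 0)
    (continuousOn_deriv_leftInverse_dilatation hL) ?_ ?_ <;> rw [interior_Ioi]
  · exact fun x hx ↦ (hderiv x hx).differentiableAt.differentiableWithinAt
  · intro x hx y hy hxy
    have hle := neg_le_neg ((strictMonoOn_leftInverse_dilatation hL).monotoneOn hx hy hxy)
    have hKy := logitK_pos (-L y)
    have hKx := logitK_pos (-L x)
    have hK := strictMono_logitK.monotone hle
    have hK'y := deriv_logitK_pos (-L y)
    have hK' := strictMono_deriv_logitK.monotone hle
    rw [(hderiv x hx).deriv, (hderiv y hy).deriv]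
    gcongr

theorem tendsto_deriv_leftInverse_dilatation_atTop : Tendsto (deriv L) atTop (𝓝 π) := by
  have hlim : Tendsto (fun K ↦ 4 / π * logitK (-L K) ^ 2) atTop (𝓝 (4 / π * (π / 2) ^ 2)) :=
    ((tendsto_logitK_atBot.comp (tendsto_neg_atTop_atBot.comp
      (tendsto_leftInverse_dilatation_atTop hL))).pow 2).const_mul (4 / π)
  rw [show 4 / π * (π / 2) ^ 2 = π by field_simp; norm_num] at hlim
  refine hlim.congr' ?_
  filter_upwards [eventually_gt_atTop 0] with K hK using (deriv_leftInverse_dilatation hL hK).symm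

theorem deriv_leftInverse_dilatation_one : deriv L 1 = 4 / π * ellK (1 / √2) ^ 2 := by
  rw [deriv_leftInverse_dilatation hL one_pos, leftInverse_dilatation_one hL, neg_zero, logitK,
    sigmoid_zero, ellK_eq_ellipticIntegral, div_pow, sq_sqrt zero_le_two, one_pow, one_div]

theorem strictAntiOn_dslope_leftInverse_dilatation : StrictAntiOn (dslope L 1) (Ioi 0) :=
  strictAntiOn_dslope_of_strictAntiOn_deriv (convex_Ioi 0) (mem_Ioi.2 one_pos)
    (fun _ hK ↦ differentiableAt_leftInverse_dilatation hL hK)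
    (continuousOn_deriv_leftInverse_dilatation hL) (strictAntiOn_deriv_leftInverse_dilatation hL)

theorem convexOn_dslope_leftInverse_dilatation : ConvexOn ℝ (Ioi 0) (dslope L 1) :=
  convexOn_dslope_of_convexOn_deriv (mem_Ioi.2 one_pos)
    (fun _ hK ↦ differentiableAt_leftInverse_dilatation hL hK)
    (continuousOn_deriv_leftInverse_dilatation hL) (convexOn_deriv_leftInverse_dilatation hL)

theorem continuousOn_dslope_leftInverse_dilatation : ContinuousOn (dslope L 1) (Ioi 0) :=
  (continuousOn_dslope (Ioi_mem_nhds one_pos)).2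
    ⟨fun _ hK ↦ (differentiableAt_leftInverse_dilatation hL hK).continuousAt.continuousWithinAt,
      differentiableAt_leftInverse_dilatation hL one_pos⟩

theorem tendsto_dslope_leftInverse_dilatation_atTop : Tendsto (dslope L 1) atTop (𝓝 π) :=
  tendsto_dslope_atTop_of_tendsto_deriv 1
    ((eventually_gt_atTop 0).mono fun _ hK ↦ differentiableAt_leftInverse_dilatation hL hK)
    (tendsto_deriv_leftInverse_dilatation_atTop hL)

end LeftInverse

theorem mu_sqrt_sigmoid (t : ℝ) : mu √(sigmoid t) = π / (2 * dilatation t) := by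
  have ht := logitK_pos t
  have hnt := logitK_pos (-t)
  rw [mu, ellK_eq_ellipticIntegral, ellK_eq_ellipticIntegral, sq_sqrt (sigmoid_pos t).le,
    ← sigmoid_neg, sq_sqrt (sigmoid_pos (-t)).le, ← logitK, ← logitK, dilatation]
  field_simp

theorem leftInverse_log_dilatation {lam : ℝ → ℝ}
    (hlam : ∀ K : ℝ, 0 < K → ∀ r ∈ Ioo (0 : ℝ) 1,
      mu r = π / (2 * K) → lam K = r ^ 2 / (1 - r ^ 2)) :
    Function.LeftInverse (fun K ↦ log (lam K)) dilatation := by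
  intro t
  have hr : √(sigmoid t) ∈ Ioo 0 1 :=
    ⟨sqrt_pos.2 (sigmoid_pos t), by simpa using sqrt_lt_sqrt (sigmoid_nonneg t) (sigmoid_lt_one t)⟩
  have hexp : sigmoid (-t) * exp t = sigmoid t := by simpa using sigmoid_mul_rexp_neg (-t)
  change log (lam (dilatation t)) = t
  rw [hlam _ (dilatation_pos t) _ hr (mu_sqrt_sigmoid t), sq_sqrt (sigmoid_pos t).le,
    ← sigmoid_neg, ← hexp, mul_div_cancel_left₀ _ (sigmoid_pos (-t)).ne', log_exp]

end Logit

end GrotzschModulus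

theorem stmt_4 (lam : ℝ → ℝ)
    (hlam : ∀ K : ℝ, 0 < K → ∀ r ∈ Set.Ioo (0:ℝ) 1,
      mu r = Real.pi / (2 * K) → lam K = r ^ 2 / (1 - r ^ 2)) (a : ℝ)
    (ha : a = 4 / Real.pi * ellK (1 / Real.sqrt 2) ^ 2) (f : ℝ → ℝ)
    (hf : f = fun K : ℝ => Real.log (lam K) / (K - 1)) :
    StrictAntiOn f (Set.Ioi 1) ∧ ConvexOn ℝ (Set.Ioi 1) f ∧
    Filter.Tendsto f (nhdsWithin 1 (Set.Ioi 1)) (nhds a) ∧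
    Filter.Tendsto f Filter.atTop (nhds Real.pi) ∧
    f '' Set.Ioi 1 = Set.Ioo Real.pi a := by
  set L : ℝ → ℝ := fun K ↦ Real.log (lam K)
  have hL : Function.LeftInverse L dilatation := leftInverse_log_dilatation hlam
  have hslope : EqOn (dslope L 1) f (Ioi 1) := fun K hK ↦ by
    simp [dslope_of_ne L (ne_of_gt hK), slope_def_field, leftInverse_dilatation_one hL, hf, L]
  have hone : dslope L 1 1 = a := by
    rw [dslope_same, deriv_leftInverse_dilatation_one hL, ha]
  have hIci : Ici (1 : ℝ) ⊆ Ioi 0 := Ici_subset_Ioi.2 one_pos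
  have hanti := (strictAntiOn_dslope_leftInverse_dilatation hL).mono hIci
  have hcont := continuousOn_dslope_leftInverse_dilatation hL
  have hlim := tendsto_dslope_leftInverse_dilatation_atTop hL
  refine ⟨(hanti.mono Ioi_subset_Ici_self).congr hslope, ?_, ?_,
    hlim.congr' (hslope.eventuallyEq_of_mem (Ioi_mem_atTop 1)), ?_⟩
  · exact ((convexOn_dslope_leftInverse_dilatation hL).subset
      (Ioi_subset_Ici_self.trans hIci) (convex_Ioi 1)).congr hslope
  · rw [← hone]
    exact ((hcont.continuousAt (Ioi_mem_nhds one_pos)).tendsto.mono_left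
      nhdsWithin_le_nhds).congr' (hslope.eventuallyEq_of_mem self_mem_nhdsWithin)
  · rw [← hslope.image_eq, ← hone]
    exact image_Ioi_eq_Ioo_of_strictAntiOn (hcont.mono hIci) hanti hlim
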